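/- Let R be a commutative ring and F a matrix in R[t]^{l×m}. Define I_1 = { a ∈ R : F(t) is equivalent to F(0) over R_a[t] } (where R_a is the localization of R at the powers of a) and I_2 = { b ∈ R : F(t + b·x) is equivalent to F(t) over R[t, x] }. Then I_1 and I_2 are ideals of R, and I_1 equals the radical of I_2. -/

import Mathlib

/-- Two `l × m` matrices over a commutative ring are equivalent if they differ by
left/right multiplication by square matrices with unit determinant. -/
def MatrixEquiv {B : Type*} [CommRing B] {l m : ℕ}
    (F G : Matrix (Fin l) (Fin m) B) : Prop :=
  ∃ (U : Matrix (Fin l) (Fin l) B) (V : Matrix (Fin m) (Fin m) B),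
    IsUnit U.det ∧ IsUnit V.det ∧ F = U * G * V

/-! If `b` and `c` lie in `I₂`, substituting `t + c * x` for `t` and composing equivalences gives
`b + c ∈ I₂`, and substituting `c * x` for `x` gives `b * c ∈ I₂`. If `a ^ n ∈ I₂`, then
`t ↦ 0`, `x ↦ t / a ^ n` turns `F(t + a ^ n * x) ~ F(t)` into `F(t) ~ F(0)` over `R_a[t]`.

Conversely, let `F = U * F(0) * V` over `R_a[t]`. Over `R_a[t, x]` this gives
`F(t + x) = U(t + x) * U(t)⁻¹ * F(t) * V(t)⁻¹ * V(t + x)`, where both outer factors are the identity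
at `x = 0` and hence are matrices over the fibre product of `R[t]` and `R_a[t, x]` over `R_a[t]`.
That fibre product is the colimit of `R[t, x] → R[t, x] → ⋯` along `x ↦ a * x`: the substitution
clears denominators in the coefficients of positive powers of `x`. So the equivalence exists at a
finite stage, which says `F(t + a ^ N * x) ~ F(t)` over `R[t, x]`, that is, `a ^ N ∈ I₂`. -/

open Polynomial Filter

theorem isUnit_det_map {A B n : Type*} [CommRing A] [CommRing B] [Fintype n] [DecidableEq n]
    {U : Matrix n n A} (hU : IsUnit U.det) (f : A →+* B) : IsUnit (U.map f).det := by
  rw [← RingHom.mapMatrix_apply, ← RingHom.map_det]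
  exact hU.map f

namespace MatrixEquiv

variable {A B : Type*} [CommRing A] [CommRing B] {l m : ℕ}

theorem refl (F : Matrix (Fin l) (Fin m) B) : MatrixEquiv F F :=
  ⟨1, 1, by simp, by simp, by simp⟩

theorem trans {F G H : Matrix (Fin l) (Fin m) B} (h₁ : MatrixEquiv F G) (h₂ : MatrixEquiv G H) :
    MatrixEquiv F H := by
  obtain ⟨U₁, V₁, hU₁, hV₁, rfl⟩ := h₁
  obtain ⟨U₂, V₂, hU₂, hV₂, rfl⟩ := h₂
  exact ⟨U₁ * U₂, V₂ * V₁, by rw [Matrix.det_mul]; exact hU₁.mul hU₂,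
    by rw [Matrix.det_mul]; exact hV₂.mul hV₁, by simp only [Matrix.mul_assoc]⟩

theorem map {F G : Matrix (Fin l) (Fin m) A} (h : MatrixEquiv F G) (f : A →+* B) :
    MatrixEquiv (F.map f) (G.map f) := by
  obtain ⟨U, V, hU, hV, rfl⟩ := h
  exact ⟨U.map f, V.map f, isUnit_det_map hU f, isUnit_det_map hV f, by
    rw [Matrix.map_mul, Matrix.map_mul]⟩

end MatrixEquiv

theorem ringHom_pow_sub_apply_pow_apply {S : Type*} [CommRing S] (f : S →+* S) {M N : ℕ}
    (h : M ≤ N) (p : S) : (f ^ (N - M)) ((f ^ M) p) = (f ^ N) p := by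
  rw [RingHom.coe_pow, RingHom.coe_pow, RingHom.coe_pow, ← Function.iterate_add_apply,
    Nat.sub_add_cancel h]

section IterateColimit

/-- `ψ` intertwines the endomorphisms `σ` and `δ`, and induces an isomorphism from the colimit of
`S → S → ⋯` along `σ` to the colimit of `D → D → ⋯` along `δ`. Both colimits are avoided by
phrasing surjectivity and injectivity in terms of iterates. -/
structure IsIterateColimitIso {S D : Type*} [CommRing S] [CommRing D] (ψ : S →+* D)
    (σ : S →+* S) (δ : D →+* D) : Prop where
  semiconj : Function.Semiconj ψ σ δ
  exists_lift : ∀ d : D, ∃ (N : ℕ) (p : S), ψ p = (δ ^ N) d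
  exists_pow_apply_eq_zero : ∀ p : S, ψ p = 0 → ∃ N : ℕ, (σ ^ N) p = 0

namespace IsIterateColimitIso

variable {S D : Type*} [CommRing S] [CommRing D] {ψ : S →+* D} {σ : S →+* S} {δ : D →+* D}

theorem map_pow_apply (h : IsIterateColimitIso ψ σ δ) (N : ℕ) (p : S) :
    ψ ((σ ^ N) p) = (δ ^ N) (ψ p) :=
  h.semiconj.iterate_right N p

theorem eventually_exists_lift (h : IsIterateColimitIso ψ σ δ) (d : D) :
    ∀ᶠ N in atTop, ∃ p : S, ψ p = (δ ^ N) d := by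
  obtain ⟨N₀, p, hp⟩ := h.exists_lift d
  filter_upwards [eventually_ge_atTop N₀] with N hN
  refine ⟨(σ ^ (N - N₀)) p, ?_⟩
  rw [h.map_pow_apply, hp, ringHom_pow_sub_apply_pow_apply δ hN]

theorem eventually_pow_apply_eq (h : IsIterateColimitIso ψ σ δ) {p q : S} (hpq : ψ p = ψ q) :
    ∀ᶠ N in atTop, (σ ^ N) p = (σ ^ N) q := by
  obtain ⟨N₀, hN₀⟩ := h.exists_pow_apply_eq_zero (p - q) (by rw [map_sub, hpq, sub_self])
  filter_upwards [eventually_ge_atTop N₀] with N hN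
  rw [← sub_eq_zero, ← map_sub, ← ringHom_pow_sub_apply_pow_apply σ hN, hN₀, map_zero]

theorem eventually_isUnit (h : IsIterateColimitIso ψ σ δ) {p : S} (hp : IsUnit (ψ p)) :
    ∀ᶠ N in atTop, IsUnit ((σ ^ N) p) := by
  obtain ⟨d, hd⟩ := hp.exists_right_inv
  obtain ⟨N, q, hq⟩ := h.exists_lift d
  have hinv : ψ ((σ ^ N) p * q) = ψ 1 := by
    rw [map_mul, h.map_pow_apply, hq, ← map_mul, hd, map_one, map_one]
  refine (tendsto_sub_atTop_nat N).eventually (h.eventually_pow_apply_eq hinv) |>.mp ?_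
  filter_upwards [eventually_ge_atTop N] with K hK hone
  refine .of_mul_eq_one ((σ ^ (K - N)) q) ?_
  rwa [map_mul, map_one, ringHom_pow_sub_apply_pow_apply σ hK] at hone

variable {ι κ : Type*} [Finite ι] [Finite κ]

theorem eventually_exists_matrix_lift (h : IsIterateColimitIso ψ σ δ) (E : Matrix ι κ D) :
    ∀ᶠ N : ℕ in atTop, ∃ E' : Matrix ι κ S, E'.map ψ = E.map ⇑(δ ^ N) := by
  have hentries : ∀ᶠ N : ℕ in atTop, ∀ i j, ∃ p : S, ψ p = (δ ^ N) (E i j) :=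
    eventually_all.mpr fun i => eventually_all.mpr fun j => h.eventually_exists_lift (E i j)
  filter_upwards [hentries] with N hN
  choose E' hE' using hN
  exact ⟨Matrix.of E', Matrix.ext hE'⟩

theorem eventually_matrix_map_pow_eq (h : IsIterateColimitIso ψ σ δ) {P Q : Matrix ι κ S}
    (hPQ : P.map ψ = Q.map ψ) : ∀ᶠ N : ℕ in atTop, P.map ⇑(σ ^ N) = Q.map ⇑(σ ^ N) := by
  have hentries : ∀ᶠ N : ℕ in atTop, ∀ i j, (σ ^ N) (P i j) = (σ ^ N) (Q i j) :=
    eventually_all.mpr fun i => eventually_all.mpr fun j =>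
      h.eventually_pow_apply_eq (congrFun₂ hPQ i j)
  filter_upwards [hentries] with N hN
  exact Matrix.ext hN

theorem eventually_isUnit_det {n : Type*} [Fintype n] [DecidableEq n]
    (h : IsIterateColimitIso ψ σ δ) {P : Matrix n n S} (hP : IsUnit (P.map ψ).det) :
    ∀ᶠ N : ℕ in atTop, IsUnit (P.map ⇑(σ ^ N)).det := by
  rw [← RingHom.mapMatrix_apply, ← RingHom.map_det] at hP
  filter_upwards [h.eventually_isUnit hP] with N hN
  rwa [← RingHom.mapMatrix_apply, ← RingHom.map_det]

theorem exists_matrixEquiv (h : IsIterateColimitIso ψ σ δ) {l m : ℕ}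
    {F G : Matrix (Fin l) (Fin m) S} (hFG : MatrixEquiv (F.map ψ) (G.map ψ)) :
    ∃ N : ℕ, MatrixEquiv (F.map ⇑(σ ^ N)) (G.map ⇑(σ ^ N)) := by
  obtain ⟨U, V, hU, hV, hUV⟩ := hFG
  obtain ⟨N, ⟨U', hU'⟩, V', hV'⟩ :=
    ((h.eventually_exists_matrix_lift U).and (h.eventually_exists_matrix_lift V)).exists
  have hmap (P : Matrix (Fin l) (Fin m) S) : (P.map ⇑(σ ^ N)).map ψ = (P.map ψ).map ⇑(δ ^ N) :=
    Matrix.ext fun i j => h.map_pow_apply N (P i j)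
  have hlift : (F.map ⇑(σ ^ N)).map ψ = (U' * G.map ⇑(σ ^ N) * V').map ψ := by
    rw [Matrix.map_mul, Matrix.map_mul, hU', hV', hmap, hmap, hUV, Matrix.map_mul, Matrix.map_mul]
  have hU'det : IsUnit (U'.map ψ).det := hU' ▸ isUnit_det_map hU (δ ^ N)
  have hV'det : IsUnit (V'.map ψ).det := hV' ▸ isUnit_det_map hV (δ ^ N)
  obtain ⟨K, ⟨hUK, hVK⟩, hK⟩ := (((h.eventually_isUnit_det hU'det).and
    (h.eventually_isUnit_det hV'det)).and (h.eventually_matrix_map_pow_eq hlift)).exists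
  have hpow (P : Matrix (Fin l) (Fin m) S) :
      (P.map ⇑(σ ^ N)).map ⇑(σ ^ K) = P.map ⇑(σ ^ (K + N)) := by
    rw [pow_add]
    rfl
  rw [Matrix.map_mul, Matrix.map_mul, hpow, hpow] at hK
  exact ⟨K + N, U'.map ⇑(σ ^ K), V'.map ⇑(σ ^ K), hUK, hVK, hK⟩

end IsIterateColimitIso

end IterateColimit

section ScaleVar

variable {S T : Type*} [CommRing S] [CommRing T]

/-- The substitution `x ↦ c * x` on polynomials in `x`. -/
noncomputable def scaleVar (c : S) : S[X] →+* S[X] :=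
  compRingHom (C c * X)

@[simp]
theorem coeff_scaleVar (c : S) (p : S[X]) (n : ℕ) :
    (scaleVar c p).coeff n = p.coeff n * c ^ n :=
  comp_C_mul_X_coeff

@[simp]
theorem scaleVar_C (c d : S) : scaleVar c (C d) = C d :=
  C_comp

@[simp]
theorem scaleVar_X (c : S) : scaleVar c X = C c * X :=
  X_comp

@[simp]
theorem eval_zero_scaleVar (c : S) (p : S[X]) : (scaleVar c p).eval 0 = p.eval 0 := by
  simp [← coeff_zero_eq_eval_zero]

theorem map_scaleVar (φ : S →+* T) (c : S) (p : S[X]) :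
    (scaleVar c p).map φ = scaleVar (φ c) (p.map φ) := by
  ext n
  simp

theorem scaleVar_pow (c : S) (N : ℕ) : scaleVar c ^ N = scaleVar (c ^ N) := by
  induction N with
  | zero => ext <;> simp
  | succ N ih =>
    refine RingHom.ext fun p => ?_
    ext n
    rw [pow_succ', RingHom.mul_def, RingHom.comp_apply, ih]
    simp [pow_succ, mul_pow, mul_assoc]

end ScaleVar

section ConstantTermPullback

variable {S T : Type*} [CommRing S] [CommRing T]

/-- The fibre product `S ×_T T[x]` along `φ` and evaluation at `x = 0`: polynomials over `T`
together with a lift of their constant term to `S`. -/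
noncomputable def constantTermPullback (φ : S →+* T) : Subring (S × T[X]) :=
  (φ.comp (RingHom.fst S T[X])).eqLocus ((evalRingHom 0).comp (RingHom.snd S T[X]))

namespace constantTermPullback

/-- The projection `S ×_T T[x] → S`. -/
noncomputable def fst (φ : S →+* T) : constantTermPullback φ →+* S :=
  (RingHom.fst S T[X]).comp (constantTermPullback φ).subtype

/-- The projection `S ×_T T[x] → T[x]`. -/
noncomputable def snd (φ : S →+* T) : constantTermPullback φ →+* T[X] :=
  (RingHom.snd S T[X]).comp (constantTermPullback φ).subtype

/-- The map `S[x] → S ×_T T[x]` whose components are evaluation at `x = 0` and `φ`. -/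
noncomputable def ofPolynomial (φ : S →+* T) : S[X] →+* constantTermPullback φ :=
  ((evalRingHom 0).prod (mapRingHom φ)).codRestrict _ fun p => (eval_zero_map φ p).symm

/-- The substitution `x ↦ c * x` on `S ×_T T[x]`. -/
noncomputable def scale (φ : S →+* T) (c : T) :
    constantTermPullback φ →+* constantTermPullback φ :=
  ((RingHom.id S).prodMap (scaleVar c)).restrict _ _ fun d hd =>
    Eq.trans hd (eval_zero_scaleVar c d.2).symm

variable {φ : S →+* T}

theorem ext {d e : constantTermPullback φ} (h₁ : fst φ d = fst φ e) (h₂ : snd φ d = snd φ e) :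
    d = e :=
  Subtype.ext (Prod.ext h₁ h₂)

theorem fst_scale_pow_apply (c : T) (N : ℕ) (d : constantTermPullback φ) :
    fst φ ((scale φ c ^ N) d) = fst φ d := by
  have h : Function.Semiconj (fst φ) (scale φ c) id := fun _ => rfl
  simpa using h.iterate_right N d

theorem snd_scale_pow_apply (c : T) (N : ℕ) (d : constantTermPullback φ) :
    snd φ ((scale φ c ^ N) d) = scaleVar (c ^ N) (snd φ d) := by
  have h : Function.Semiconj (snd φ) (scale φ c) (scaleVar c) := fun _ => rfl
  rw [← scaleVar_pow]
  exact h.iterate_right N d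

theorem isUnit_of_isUnit_fst_of_isUnit_snd {d : constantTermPullback φ} (h₁ : IsUnit (fst φ d))
    (h₂ : IsUnit (snd φ d)) : IsUnit d := by
  obtain ⟨s, hs⟩ := h₁.exists_right_inv
  obtain ⟨p, hp⟩ := h₂.exists_right_inv
  have hsp : φ s = p.eval 0 := (h₁.map φ).mul_left_cancel <| by
    rw [← map_mul, hs, map_one, show φ (fst φ d) = (snd φ d).eval 0 from d.2, ← eval_mul, hp,
      eval_one]
  exact .of_mul_eq_one ⟨(s, p), hsp⟩ (ext hs hp)

theorem exists_matrix_lift {n : Type*} [Fintype n] [DecidableEq n] (φ : S →+* T)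
    {U : Matrix n n T[X]} (hU : IsUnit U.det) (hU₀ : U.map (evalRingHom 0) = 1) :
    ∃ U' : Matrix n n (constantTermPullback φ), IsUnit U'.det ∧
      U'.map (fst φ) = 1 ∧ U'.map (snd φ) = U := by
  have hconst (i j : n) : φ ((1 : Matrix n n S) i j) = (U i j).eval 0 := by
    refine Eq.trans ?_ (congrFun₂ hU₀ i j).symm
    simp [Matrix.one_apply, apply_ite φ]
  let U' : Matrix n n (constantTermPullback φ) := Matrix.of fun i j =>
    ⟨((1 : Matrix n n S) i j, U i j), hconst i j⟩
  have hfst : fst φ U'.det = 1 := ((fst φ).map_det U').trans Matrix.det_one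
  have hsnd : snd φ U'.det = U.det := (snd φ).map_det U'
  exact ⟨U', isUnit_of_isUnit_fst_of_isUnit_snd (hfst ▸ isUnit_one) (hsnd ▸ hU), rfl, rfl⟩

end constantTermPullback

attribute [local instance] Polynomial.algebra

theorem isLocalizationAway_C [Algebra S T] (a : S) [IsLocalization.Away a T] :
    IsLocalization.Away (C a) T[X] := by
  have := Polynomial.isLocalization (Submonoid.powers a) T
  rwa [Submonoid.map_powers] at this

theorem exists_polynomial_lift [Algebra S T] (a : S) [IsLocalization.Away a T] (p : T[X]) (s : S)
    (hs : algebraMap S T s = p.eval 0) :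
    ∃ (N : ℕ) (q : S[X]), q.eval 0 = s ∧
      q.map (algebraMap S T) = scaleVar (algebraMap S T a ^ N) p := by
  have := isLocalizationAway_C (T := T) a
  obtain ⟨N, q, hq⟩ := IsLocalization.Away.surj (C a) p
  have hcoeff (n : ℕ) : algebraMap S T (q.coeff n) = p.coeff n * algebraMap S T a ^ N := by
    have h := congrArg (coeff · n) hq
    rw [algebraMap_def, coe_mapRingHom, map_C, ← C_pow, coeff_mul_C, coeff_map] at h
    exact h.symm
  refine ⟨N, X * scaleVar (a ^ N) q.divX + C s, by simp, ?_⟩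
  ext n
  cases n with
  | zero => simp [hs, ← coeff_zero_eq_eval_zero]
  | succ n => simp [coeff_divX, hcoeff, pow_succ, mul_assoc, mul_comm]

theorem exists_scaleVar_eq_zero [Algebra S T] (a : S) [IsLocalization.Away a T] (p : S[X])
    (h₀ : p.eval 0 = 0) (hp : p.map (algebraMap S T) = 0) :
    ∃ N : ℕ, scaleVar (a ^ N) p = 0 := by
  have := isLocalizationAway_C (T := T) a
  obtain ⟨N, hN⟩ := IsLocalization.Away.exists_of_eq (S := T[X]) (C a)
    (show algebraMap S[X] T[X] p = algebraMap S[X] T[X] 0 by simpa using hp)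
  have hcoeff (n : ℕ) : a ^ N * p.coeff n = 0 := by
    have h := congrArg (coeff · n) hN
    rwa [mul_zero, ← C_pow, coeff_C_mul, coeff_zero] at h
  refine ⟨N, ?_⟩
  ext n
  cases n with
  | zero => rw [coeff_zero_eq_eval_zero, eval_zero_scaleVar, h₀, coeff_zero]
  | succ n => rw [coeff_scaleVar, pow_succ', ← mul_assoc, mul_comm _ (a ^ N), hcoeff, zero_mul,
      coeff_zero]

open constantTermPullback in
theorem constantTermPullback.isIterateColimitIso_ofPolynomial [Algebra S T] (a : S)
    [IsLocalization.Away a T] :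
    IsIterateColimitIso (ofPolynomial (algebraMap S T)) (scaleVar a)
      (scale (algebraMap S T) (algebraMap S T a)) where
  semiconj p := ext (eval_zero_scaleVar a p) (map_scaleVar _ a p)
  exists_lift d := by
    obtain ⟨N, q, hq₀, hq⟩ := exists_polynomial_lift a (snd _ d) (fst _ d) d.2
    exact ⟨N, q, ext (hq₀.trans (fst_scale_pow_apply _ N d).symm)
      (hq.trans (snd_scale_pow_apply _ N d).symm)⟩
  exists_pow_apply_eq_zero p hp := by
    have h₀ : p.eval 0 = 0 := congrArg (fst _) hp
    have hmap : p.map (algebraMap S T) = 0 := congrArg (snd _) hp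
    obtain ⟨N, hN⟩ := exists_scaleVar_eq_zero (T := T) a p h₀ hmap
    exact ⟨N, by rw [scaleVar_pow, hN]⟩

end ConstantTermPullback

section RelZero

variable {A B S T : Type*} [CommRing A] [CommRing B] [CommRing S] [CommRing T] {l m : ℕ}

/-- Equivalence of matrices over `B[x]` through invertible matrices which are the identity at
`x = 0`. -/
def MatrixEquivRelZero (F G : Matrix (Fin l) (Fin m) B[X]) : Prop :=
  ∃ (U : Matrix (Fin l) (Fin l) B[X]) (V : Matrix (Fin m) (Fin m) B[X]),
    IsUnit U.det ∧ IsUnit V.det ∧ U.map (evalRingHom 0) = 1 ∧ V.map (evalRingHom 0) = 1 ∧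
      F = U * G * V

theorem MatrixEquiv.matrixEquivRelZero_map {F G : Matrix (Fin l) (Fin m) A}
    (h : MatrixEquiv F G) {τ γ : A →+* B[X]}
    (h₀ : (evalRingHom 0).comp τ = (evalRingHom 0).comp γ) (hG : G.map τ = G.map γ) :
    MatrixEquivRelZero (F.map τ) (F.map γ) := by
  obtain ⟨U, V, hU, hV, rfl⟩ := h
  have hev {k : ℕ} (W : Matrix (Fin k) (Fin k) A) :
      (W.map τ).map (evalRingHom 0) = (W.map γ).map (evalRingHom 0) :=
    Matrix.ext fun i j => RingHom.congr_fun h₀ (W i j)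
  have hmap_one {k : ℕ} (f : A →+* B[X]) : (1 : Matrix (Fin k) (Fin k) A).map f = 1 :=
    Matrix.map_one f f.map_zero f.map_one
  have hU' : U⁻¹.map γ * U.map γ = 1 := by
    rw [← Matrix.map_mul, Matrix.nonsing_inv_mul _ hU, hmap_one]
  have hV' : V.map γ * V⁻¹.map γ = 1 := by
    rw [← Matrix.map_mul, Matrix.mul_nonsing_inv _ hV, hmap_one]
  refine ⟨U.map τ * U⁻¹.map γ, V⁻¹.map γ * V.map τ, ?_, ?_, ?_, ?_, ?_⟩
  · rw [Matrix.det_mul]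
    exact (isUnit_det_map hU τ).mul (isUnit_det_map (Matrix.isUnit_nonsing_inv_det _ hU) γ)
  · rw [Matrix.det_mul]
    exact (isUnit_det_map (Matrix.isUnit_nonsing_inv_det _ hV) γ).mul (isUnit_det_map hV τ)
  · rw [Matrix.map_mul, hev, ← Matrix.map_mul, mul_eq_one_comm.mp hU']
    exact Matrix.map_one _ (map_zero _) (map_one _)
  · rw [Matrix.map_mul, hev, ← Matrix.map_mul, mul_eq_one_comm.mp hV']
    exact Matrix.map_one _ (map_zero _) (map_one _)
  · simp only [Matrix.map_mul]
    calc U.map τ * G.map τ * V.map τ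
        = U.map τ * ((U⁻¹.map γ * U.map γ) * G.map γ * (V.map γ * V⁻¹.map γ)) * V.map τ := by
          rw [hU', hV', hG, Matrix.one_mul, Matrix.mul_one]
      _ = _ := by simp only [Matrix.mul_assoc]

theorem MatrixEquivRelZero.matrixEquiv_ofPolynomial {φ : S →+* T}
    {F G : Matrix (Fin l) (Fin m) S[X]} (h₀ : F.map (evalRingHom 0) = G.map (evalRingHom 0))
    (h : MatrixEquivRelZero (F.map (mapRingHom φ)) (G.map (mapRingHom φ))) :
    MatrixEquiv (F.map (constantTermPullback.ofPolynomial φ))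
      (G.map (constantTermPullback.ofPolynomial φ)) := by
  obtain ⟨U, V, hU, hV, hU₀, hV₀, hFG⟩ := h
  obtain ⟨U', hU', hU'fst, hU'snd⟩ := constantTermPullback.exists_matrix_lift φ hU hU₀
  obtain ⟨V', hV', hV'fst, hV'snd⟩ := constantTermPullback.exists_matrix_lift φ hV hV₀
  let π₁ := constantTermPullback.fst φ
  let π₂ := constantTermPullback.snd φ
  let ψ := constantTermPullback.ofPolynomial φ
  have hfst : (F.map ψ).map π₁ = (U' * G.map ψ * V').map π₁ := by
    rw [Matrix.map_mul, Matrix.map_mul, hU'fst, hV'fst, Matrix.one_mul, Matrix.mul_one]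
    exact h₀
  have hsnd : (F.map ψ).map π₂ = (U' * G.map ψ * V').map π₂ := by
    rw [Matrix.map_mul, Matrix.map_mul, hU'snd, hV'snd]
    exact hFG
  exact ⟨U', V', hU', hV', Matrix.ext fun i j =>
    constantTermPullback.ext (congrFun₂ hfst i j) (congrFun₂ hsnd i j)⟩

theorem MatrixEquivRelZero.exists_matrixEquiv_scaleVar [Algebra S T] (a : S)
    [IsLocalization.Away a T] {F G : Matrix (Fin l) (Fin m) S[X]}
    (h₀ : F.map (evalRingHom 0) = G.map (evalRingHom 0))
    (h : MatrixEquivRelZero (F.map (mapRingHom (algebraMap S T)))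
      (G.map (mapRingHom (algebraMap S T)))) :
    ∃ N : ℕ, MatrixEquiv (F.map (scaleVar (a ^ N))) (G.map (scaleVar (a ^ N))) := by
  obtain ⟨N, hN⟩ := (constantTermPullback.isIterateColimitIso_ofPolynomial (T := T) a
    ).exists_matrixEquiv (h.matrixEquiv_ofPolynomial h₀)
  exact ⟨N, by rwa [scaleVar_pow] at hN⟩

end RelZero

section Translation

variable {R T : Type*} [CommRing R] [CommRing T] {l m : ℕ}

/-- The substitution `t ↦ t + b * x` from `R[t]` to `R[t, x]`, where `R[t, x]` is `R[X][X]` with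
inner variable `t` and outer variable `x`. -/
noncomputable def translateVar (b : R) : R[X] →ₐ[R] R[X][X] :=
  aeval (C X + C (C b) * X)

@[simp]
theorem translateVar_X (b : R) : translateVar b X = C X + C (C b) * X :=
  aeval_X _

@[simp]
theorem translateVar_C (b c : R) : translateVar b (C c) = C (C c) :=
  aeval_C _ c

theorem eval₂_aeval_translateVar {A : Type*} [CommRing A] [Algebra R A] (b : R) (u v : A)
    (f : R[X]) :
    eval₂ (aeval u : R[X] →ₐ[R] A).toRingHom v (translateVar b f) =
      aeval (u + algebraMap R A b * v) f := by
  have : (eval₂RingHom (aeval u : R[X] →ₐ[R] A).toRingHom v).comp (translateVar b).toRingHom =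
      (aeval (u + algebraMap R A b * v)).toRingHom := by
    ext <;> simp
  exact RingHom.congr_fun this f

theorem eval_zero_translateVar (b : R) (f : R[X]) : (translateVar b f).eval 0 = f := by
  have : (evalRingHom 0).comp (translateVar b).toRingHom = RingHom.id R[X] := by
    ext <;> simp
  exact RingHom.congr_fun this f

theorem translateVar_zero (f : R[X]) : translateVar 0 f = C f := by
  have : (translateVar 0).toRingHom = (C : R[X] →+* R[X][X]) := by
    ext <;> simp
  exact RingHom.congr_fun this f

theorem scaleVar_C_translateVar (b c : R) (f : R[X]) :
    scaleVar (C c) (translateVar b f) = translateVar (b * c) f := by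
  have : (scaleVar (C c)).comp (translateVar b).toRingHom = (translateVar (b * c)).toRingHom := by
    ext <;> simp [mul_assoc]
  exact RingHom.congr_fun this f

theorem map_mapRingHom_translateVar (φ : R →+* T) (b : R) (f : R[X]) :
    (translateVar b f).map (mapRingHom φ) = translateVar (φ b) (f.map φ) := by
  have : (mapRingHom (mapRingHom φ)).comp (translateVar b).toRingHom =
      (translateVar (φ b)).toRingHom.comp (mapRingHom φ) := by
    ext <;> simp
  exact RingHom.congr_fun this f

/-- `F(t + b * x)` is equivalent to `F(t)` over `R[t, x]`. -/
def TranslationEquiv (F : Matrix (Fin l) (Fin m) R[X]) (b : R) : Prop :=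
  MatrixEquiv (F.map (translateVar b)) (F.map C)

/-- `F(t)` is equivalent to `F(0)` over `R_a[t]`. -/
def MatrixEquivConstAway (F : Matrix (Fin l) (Fin m) R[X]) (a : R) : Prop :=
  MatrixEquiv (F.map (Polynomial.map (algebraMap R (Localization.Away a))))
    (F.map (fun f => C (algebraMap R (Localization.Away a) (f.eval 0))))

namespace TranslationEquiv

variable {F : Matrix (Fin l) (Fin m) R[X]} {a b c : R}

theorem matrixEquiv_aeval (h : TranslationEquiv F b) {A : Type*} [CommRing A] [Algebra R A]
    (u v : A) : MatrixEquiv (F.map (aeval (u + algebraMap R A b * v))) (F.map (aeval u)) := by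
  convert h.map (eval₂RingHom (aeval u : R[X] →ₐ[R] A).toRingHom v) using 1
  · exact Matrix.ext fun i j => (eval₂_aeval_translateVar b u v (F i j)).symm
  · exact Matrix.ext fun i j => (eval₂_C (aeval u : R[X] →ₐ[R] A).toRingHom v).symm

theorem zero (F : Matrix (Fin l) (Fin m) R[X]) : TranslationEquiv F 0 := by
  have h : F.map (translateVar 0) = F.map C := Matrix.ext fun i j => translateVar_zero (F i j)
  rw [TranslationEquiv, h]
  exact .refl _

theorem add (hb : TranslationEquiv F b) (hc : TranslationEquiv F c) :
    TranslationEquiv F (b + c) := by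
  have h := hb.matrixEquiv_aeval (C X + C (C c) * X) X
  have hsum : C X + C (C c) * X + algebraMap R R[X][X] b * X = C X + C (C (b + c)) * X := by
    simp only [Polynomial.algebraMap_apply, Algebra.algebraMap_self_apply, C_add]
    ring
  rw [hsum] at h
  exact h.trans hc

theorem mul_right (hb : TranslationEquiv F b) (c : R) : TranslationEquiv F (b * c) := by
  unfold TranslationEquiv
  convert hb.map (scaleVar (C c)) using 1
  · exact Matrix.ext fun i j => (scaleVar_C_translateVar b c (F i j)).symm
  · exact Matrix.ext fun i j => (scaleVar_C _ _).symm

theorem matrixEquivConstAway {n : ℕ} (h : TranslationEquiv F (a ^ n)) :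
    MatrixEquivConstAway F a := by
  obtain ⟨c, hc⟩ :=
    (IsLocalization.Away.algebraMap_pow_isUnit (S := Localization.Away a) a n).exists_right_inv
  have hX : 0 + algebraMap R (Localization.Away a)[X] (a ^ n) * (C c * X) = X := by
    rw [Polynomial.algebraMap_apply, ← mul_assoc, ← C_mul, map_pow, hc, C_1, one_mul, zero_add]
  have key := h.matrixEquiv_aeval 0 (C c * X)
  rw [hX] at key
  unfold MatrixEquivConstAway
  convert key using 1
  · exact Matrix.ext fun i j => (aeval_X_left_eq_map (F i j)).symm
  · refine Matrix.ext fun i j => ?_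
    rw [Matrix.map_apply, Matrix.map_apply, ← coeff_zero_eq_aeval_zero',
      Polynomial.algebraMap_apply, coeff_zero_eq_eval_zero]

end TranslationEquiv

/-- The ideal `I₂` of all `b` such that `F(t + b * x)` is equivalent to `F(t)` over `R[t, x]`. -/
def translationIdeal (F : Matrix (Fin l) (Fin m) R[X]) : Ideal R where
  carrier := {b | TranslationEquiv F b}
  zero_mem' := .zero F
  add_mem' hb hc := hb.add hc
  smul_mem' r _ hb := by
    rw [smul_eq_mul, mul_comm]
    exact hb.mul_right r

attribute [local instance] Polynomial.algebra in
theorem MatrixEquivConstAway.exists_translationEquiv {F : Matrix (Fin l) (Fin m) R[X]} {a : R}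
    (h : MatrixEquivConstAway F a) : ∃ n, TranslationEquiv F (a ^ n) := by
  let T := Localization.Away a
  let ι : R →+* T := algebraMap R T
  have := isLocalizationAway_C (T := T) a
  have hconst : (F.map fun f => (C (ι (f.eval 0)) : T[X])).map (translateVar 1).toRingHom =
      (F.map fun f => (C (ι (f.eval 0)) : T[X])).map C :=
    Matrix.ext fun i j => translateVar_C 1 _
  have hrel : MatrixEquivRelZero ((F.map (Polynomial.map ι)).map (translateVar 1).toRingHom)
      ((F.map (Polynomial.map ι)).map C) :=
    h.matrixEquivRelZero_map
      (RingHom.ext fun p => (eval_zero_translateVar 1 p).trans eval_C.symm) hconst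
  have htranslate : (F.map (Polynomial.map ι)).map (translateVar 1).toRingHom =
      (F.map (translateVar 1)).map (mapRingHom (mapRingHom ι)) :=
    Matrix.ext fun i j => by simp [map_mapRingHom_translateVar]
  have hC : (F.map (Polynomial.map ι)).map C = (F.map C).map (mapRingHom (mapRingHom ι)) :=
    Matrix.ext fun i j => (map_C (mapRingHom ι)).symm
  rw [htranslate, hC] at hrel
  obtain ⟨N, hN⟩ := hrel.exists_matrixEquiv_scaleVar (F := F.map (translateVar 1))
    (G := F.map C) (C a)
    (Matrix.ext fun i j => (eval_zero_translateVar 1 (F i j)).trans eval_C.symm)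
  refine ⟨N, ?_⟩
  unfold TranslationEquiv
  convert hN using 1
  · refine Matrix.ext fun i j => ?_
    rw [Matrix.map_apply, Matrix.map_apply, Matrix.map_apply, ← C_pow, scaleVar_C_translateVar,
      one_mul]
  · exact Matrix.ext fun i j => (scaleVar_C _ _).symm

end Translation

/-- for `F ∈ R[t]^{l×m}`, the sets
`I₁ = { a | F(t) ∼ F(0) over R_a[t] }` and
`I₂ = { b | F(t + b·x) ∼ F(t) over R[t,x] }` are ideals of `R`,
and `I₁ = rad I₂`.  Here `R[t,x]` is modelled as `Polynomial (Polynomial R)`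
(inner variable `t`, outer variable `x`), and `R_a` is `Localization.Away a`. -/
theorem stmt1 {R : Type*} [CommRing R] {l m : ℕ}
    (F : Matrix (Fin l) (Fin m) (Polynomial R)) :
    ∃ I₁ I₂ : Ideal R,
      (I₁ : Set R) = {a : R | MatrixEquiv
          (F.map (Polynomial.map (algebraMap R (Localization.Away a))))
          (F.map (fun f => Polynomial.C (algebraMap R (Localization.Away a) (f.eval 0))))} ∧
      (I₂ : Set R) = {b : R | MatrixEquiv
          (F.map (fun f => Polynomial.aeval
            (Polynomial.C Polynomial.X + Polynomial.C (Polynomial.C b) * Polynomial.X :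
              Polynomial (Polynomial R)) f))
          (F.map (fun f => (Polynomial.C f : Polynomial (Polynomial R))))} ∧
      I₁ = I₂.radical := by
  have hmem (a : R) : a ∈ (translationIdeal F).radical ↔ MatrixEquivConstAway F a :=
    ⟨fun ⟨_, hn⟩ => TranslationEquiv.matrixEquivConstAway hn, fun h => h.exists_translationEquiv⟩
  exact ⟨(translationIdeal F).radical, translationIdeal F, Set.ext hmem, rfl, rfl⟩
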